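/- arXiv:1803.02386 — 4 statements merged into one kernel-verified Lean document; each statement's English description precedes it below -/
import Mathlib

section
/- Let g, h, z : ℝ → ℝ be functions that are nonnegative on (0, ∞), with z continuous on [0, ∞) and differentiable on (0, ∞), and with g, h and z integrable on every bounded subinterval of (0, ∞). Assume that z'(t) ≤ g(t)·z(t) + h(t) for every t > 0. Let r > 0 and suppose there exist constants a₁, a₂, a₃ ≥ 0 such that for every t ≥ 0 one has ∫_t^{t+r} g(s) ds ≤ a₁, ∫_t^{t+r} h(s) ds ≤ a₂, and ∫_t^{t+r} z(s) ds ≤ a₃. Then for every t ≥ 0, z(t + r) ≤ (a₂ + a₃/r) · exp(a₁). -/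
/-!
For `0 < s ≤ b` the one-sided fundamental theorem of calculus turns `z' ≤ g z + h` into the integral
inequality `z x ≤ z s + ∫ h + ∫_s^x g z` on `[s, b]`; no integrability of `z'` is needed. The
integral form of Gronwall's inequality for a merely integrable `g` (`gronwall_integral`) then gives
`z b ≤ (z s + ∫_s^b h) * exp (∫_s^b g)`. It is proved by noting that
`(C + ∫_s^x g z) * exp (-∫_s^x g)` is absolutely continuous with a.e. nonpositive derivative.

With `b = t + r`, this yields `z (t + r) ≤ (z s + a₂) * exp a₁` for every `s ∈ (t, t + r)`;
averaging over `s` replaces `z s` by `a₃ / r`.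
-/

open MeasureTheory Set

/-- Absolute continuity survives composition with `exp`, which is Lipschitz on the bounded range. -/
theorem AbsolutelyContinuousOnInterval.real_exp {f : ℝ → ℝ} {a b : ℝ}
    (hf : AbsolutelyContinuousOnInterval f a b) :
    AbsolutelyContinuousOnInterval (fun x => Real.exp (f x)) a b := by
  obtain ⟨C, hC⟩ := hf.exists_bound
  obtain ⟨K, hK⟩ := (Real.contDiff_exp (n := 1)).contDiffOn.exists_lipschitzOnWith
    (s := Icc (-C) C) (by decide) (convex_Icc _ _) isCompact_Icc
  unfold AbsolutelyContinuousOnInterval at hf ⊢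
  apply squeeze_zero' ?_ ?_ (by simpa using hf.const_mul (K : ℝ))
  · exact Filter.Eventually.of_forall fun _ => Finset.sum_nonneg fun i hi => dist_nonneg
  rw [Filter.eventually_inf_principal]
  filter_upwards with (n, I) hnI
  simp only [Finset.mul_sum]
  gcongr with i hi
  have hmem := hnI.1 i hi
  exact hK.dist_le_mul _ (abs_le.mp (hC _ hmem.1)) _ (abs_le.mp (hC _ hmem.2))

/-- Integral form of Gronwall's inequality with an integrable nonnegative coefficient `g`. -/
theorem gronwall_integral {g z : ℝ → ℝ} {s b C : ℝ} (hsb : s ≤ b)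
    (hg : ∀ x ∈ Icc s b, 0 ≤ g x) (hg_int : IntervalIntegrable g volume s b)
    (hz : ContinuousOn z (Icc s b))
    (hle : ∀ x ∈ Icc s b, z x ≤ C + ∫ y in s..x, g y * z y) :
    z b ≤ C * Real.exp (∫ y in s..b, g y) := by
  have hgz_int : IntervalIntegrable (fun y => g y * z y) volume s b :=
    hg_int.mul_continuousOn (by rwa [uIcc_of_le hsb])
  have hG := hg_int.absolutelyContinuousOnInterval_intervalIntegral (c := s) (by simp)
  have hP := hgz_int.absolutelyContinuousOnInterval_intervalIntegral (c := s) (by simp)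
  have hconst : AbsolutelyContinuousOnInterval (fun _ : ℝ => C) s b :=
    contDiffOn_const.absolutelyContinuousOnInterval
  set F : ℝ → ℝ := fun x =>
    (C + ∫ y in s..x, g y * z y) * Real.exp (-∫ y in s..x, g y) with hF
  have hFac : AbsolutelyContinuousOnInterval F s b := (hconst.add hP).mul hG.neg.real_exp
  have hderiv : ∀ᵐ x, x ∈ Icc s b → deriv F x ≤ 0 := by
    filter_upwards [hg_int.ae_hasDerivAt_integral, hgz_int.ae_hasDerivAt_integral]
      with x h1 h2 hx
    have hx' : x ∈ uIcc s b := by rwa [uIcc_of_le hsb]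
    have hd := ((h2 hx' s (by simp)).const_add C).mul (h1 hx' s (by simp)).neg.exp
    rw [show deriv F x = _ from hd.deriv]
    have key : 0 ≤ g x * ((C + ∫ y in s..x, g y * z y) - z x) *
        Real.exp (-∫ y in s..x, g y) :=
      mul_nonneg (mul_nonneg (hg x hx) (sub_nonneg.2 (hle x hx))) (Real.exp_pos _).le
    simp only [Pi.neg_apply]
    linarith
  have hFb : F b ≤ C := by
    have h0 : 0 ≤ ∫ x in s..b, -deriv F x := by
      apply intervalIntegral.integral_nonneg_of_ae_restrict hsb
      rw [Filter.EventuallyLE, ae_restrict_iff' measurableSet_Icc]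
      filter_upwards [hderiv] with x hx hxs
      simpa using hx hxs
    rw [intervalIntegral.integral_neg, hFac.integral_deriv_eq_sub] at h0
    have hFs : F s = C := by simp [hF]
    linarith
  calc z b ≤ C + ∫ y in s..b, g y * z y := hle b (right_mem_Icc.2 hsb)
    _ = F b * Real.exp (∫ y in s..b, g y) := by
      simp only [hF]
      rw [mul_assoc, ← Real.exp_add]
      simp
    _ ≤ _ := mul_le_mul_of_nonneg_right hFb (Real.exp_pos _).le

/-- **Uniform Gronwall Lemma.** If `z' ≤ g z + h` on `(0, ∞)`, the functions are
nonnegative there, locally integrable, and the sliding-window integrals of `g`, `h`, `z`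
over intervals of length `r` are bounded by `a₁`, `a₂`, `a₃`, then
`z (t + r) ≤ (a₂ + a₃ / r) * exp a₁` for all `t ≥ 0`. -/
theorem uniform_gronwall
    (g h z z' : ℝ → ℝ)
    (hg_nonneg : ∀ t : ℝ, 0 < t → 0 ≤ g t)
    (hh_nonneg : ∀ t : ℝ, 0 < t → 0 ≤ h t)
    (hz_nonneg : ∀ t : ℝ, 0 < t → 0 ≤ z t)
    (hz_cont : ContinuousOn z (Ici (0 : ℝ)))
    (hz_deriv : ∀ t : ℝ, 0 < t → HasDerivAt z (z' t) t)
    (hg_int : ∀ a b : ℝ, 0 ≤ a → a ≤ b → IntervalIntegrable g volume a b)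
    (hh_int : ∀ a b : ℝ, 0 ≤ a → a ≤ b → IntervalIntegrable h volume a b)
    (hz_int : ∀ a b : ℝ, 0 ≤ a → a ≤ b → IntervalIntegrable z volume a b)
    (hineq : ∀ t : ℝ, 0 < t → z' t ≤ g t * z t + h t)
    (r : ℝ) (hr : 0 < r)
    (a₁ a₂ a₃ : ℝ) (ha₁ : 0 ≤ a₁) (ha₂ : 0 ≤ a₂) (ha₃ : 0 ≤ a₃)
    (hGa : ∀ t : ℝ, 0 ≤ t → (∫ s in t..(t + r), g s) ≤ a₁)
    (hHa : ∀ t : ℝ, 0 ≤ t → (∫ s in t..(t + r), h s) ≤ a₂)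
    (hZa : ∀ t : ℝ, 0 ≤ t → (∫ s in t..(t + r), z s) ≤ a₃) :
    ∀ t : ℝ, 0 ≤ t → z (t + r) ≤ (a₂ + a₃ / r) * Real.exp a₁ := by
  intro t ht
  have key : ∀ s ∈ Ioo t (t + r), z (t + r) ≤ (z s + a₂) * Real.exp a₁ := by
    rintro s ⟨hts, hsr⟩
    have hs : 0 < s := ht.trans_lt hts
    have hzc : ContinuousOn z (Icc s (t + r)) :=
      hz_cont.mono fun x hx => hs.le.trans hx.1
    have htr : t ≤ t + r := by linarith
    -- Windows `[s, t + r]` are shorter than `r`; nonnegativity extends them to `[t, t + r]`.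
    have shrink : ∀ f : ℝ → ℝ, (∀ x, 0 < x → 0 ≤ f x) →
        (∀ a b : ℝ, 0 ≤ a → a ≤ b → IntervalIntegrable f volume a b) →
        ∀ u v, t ≤ u → u ≤ v → v ≤ t + r →
        ∫ y in u..v, f y ≤ ∫ y in t..(t + r), f y := by
      intro f hf hfi u v hu huv hv
      refine intervalIntegral.integral_mono_interval hu huv hv ?_ (hfi _ _ ht htr)
      rw [Filter.EventuallyLE, ae_restrict_iff' measurableSet_Ioc]
      exact Filter.Eventually.of_forall fun x hx => hf x (ht.trans_lt hx.1)
    have hgr := gronwall_integral (g := g) (z := z) (C := z s + a₂) hsr.le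
      (fun x hx => hg_nonneg x (hs.trans_le hx.1)) (hg_int _ _ hs.le hsr.le) hzc ?_
    · refine hgr.trans (mul_le_mul_of_nonneg_left (Real.exp_le_exp.2 ?_)
        (add_nonneg (hz_nonneg s hs) ha₂))
      exact (shrink g hg_nonneg hg_int s (t + r) hts.le hsr.le le_rfl).trans (hGa t ht)
    · rintro x ⟨hsx, hxr⟩
      have hzx : ContinuousOn z (Icc s x) := hzc.mono (Icc_subset_Icc_right hxr)
      have hgz : IntervalIntegrable (fun y => g y * z y) volume s x :=
        (hg_int s x hs.le hsx).mul_continuousOn (by rwa [uIcc_of_le hsx])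
      have hh := hh_int s x hs.le hsx
      have hftc := intervalIntegral.sub_le_integral_of_hasDeriv_right_of_le hsx hzx
        (fun y hy => (hz_deriv y (hs.trans hy.1)).hasDerivWithinAt)
        ((intervalIntegrable_iff_integrableOn_Icc_of_le hsx).1 (hgz.add hh))
        (fun y hy => hineq y (hs.trans hy.1))
      have hsum : ∫ y in s..x, (g y * z y + h y) =
          (∫ y in s..x, g y * z y) + ∫ y in s..x, h y := intervalIntegral.integral_add hgz hh
      have hha := (shrink h hh_nonneg hh_int s x hts.le hsx hxr).trans (hHa t ht)
      have hftc' : z x - z s ≤ ∫ y in s..x, (g y * z y + h y) := hftc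
      linarith
  have hzi := hz_int t (t + r) ht (by linarith)
  have havg : ∫ _ in t..(t + r), z (t + r) ≤ ∫ s in t..(t + r), (z s + a₂) * Real.exp a₁ :=
    intervalIntegral.integral_mono_on_of_le_Ioo (by linarith) intervalIntegrable_const
      ((hzi.add intervalIntegrable_const).mul_const _) key
  rw [intervalIntegral.integral_mul_const,
    intervalIntegral.integral_add hzi intervalIntegrable_const] at havg
  simp only [intervalIntegral.integral_const, add_sub_cancel_left, smul_eq_mul] at havg
  have hfin : r * z (t + r) ≤ (a₃ + r * a₂) * Real.exp a₁ :=
    havg.trans (mul_le_mul_of_nonneg_right (by linarith [hZa t ht]) (Real.exp_pos _).le)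
  rw [← mul_le_mul_iff_right₀ hr]
  calc r * z (t + r) ≤ (a₃ + r * a₂) * Real.exp a₁ := hfin
    _ = r * ((a₂ + a₃ / r) * Real.exp a₁) := by field_simp; ring
end

section
/- Let k > 0 and let d, g, h : ℕ → ℝ be sequences with dⁿ ≥ 0, gⁿ ≥ 0, hⁿ ≥ 0 for all n ≥ 0, satisfying the recursion (d^{n+1} − dⁿ)/k ≤ gⁿ·dⁿ + hⁿ for all n ≥ 0. Let r ≥ 1 be a natural number and suppose there exist constants a₁, a₂, a₃ ≥ 0 such that for every n₀ ≥ 0 one has k·∑_{n=n₀}^{n₀+r−1} gⁿ ≤ a₁, k·∑_{n=n₀}^{n₀+r−1} hⁿ ≤ a₂, and k·∑_{n=n₀}^{n₀+r−1} dⁿ ≤ a₃. Then for every n ≥ r, dⁿ ≤ (a₂ + a₃/(k·r)) · exp(a₁). -/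
/-!
The discrete Gronwall inequality from a starting index `m` to `n` bounds `d n` by
`(d m + k ∑ h) * exp (k ∑ g)`, the sums running over `[m, n)` (`gronwall_from`). For `m` in the
window `[n - r, n)` both sums are at most the full window sums, so `d n ≤ (d m + a₂) * exp a₁`.
Some `m` in the window has `d m` at most the window average of `d`, which is at most
`a₃ / (k r)`.
-/

/-- The ordinary discrete Gronwall inequality, by induction using `1 + x ≤ exp x`. -/
lemma gronwall_from (k : ℝ) (hk : 0 < k) (d g h : ℕ → ℝ)
    (hd : ∀ n : ℕ, 0 ≤ d n) (hg : ∀ n : ℕ, 0 ≤ g n) (hh : ∀ n : ℕ, 0 ≤ h n)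
    (hrec : ∀ n : ℕ, (d (n + 1) - d n) / k ≤ g n * d n + h n) (m n : ℕ) (hmn : m ≤ n) :
    d n ≤ (d m + k * ∑ i ∈ Finset.Ico m n, h i) * Real.exp (k * ∑ i ∈ Finset.Ico m n, g i) := by
  induction n, hmn using Nat.le_induction with
  | base => simp
  | succ n hmn ih =>
    rw [Finset.sum_Ico_succ_top hmn, Finset.sum_Ico_succ_top hmn]
    have hG : 0 ≤ ∑ i ∈ Finset.Ico m n, g i := Finset.sum_nonneg fun i _ => hg i
    set H := ∑ i ∈ Finset.Ico m n, h i
    set G := ∑ i ∈ Finset.Ico m n, g i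
    have hstep : d (n + 1) ≤ d n * (k * g n + 1) + k * h n := by
      have := (div_le_iff₀ hk).1 (hrec n)
      linarith
    have hone : 1 ≤ Real.exp (k * (G + g n)) :=
      Real.one_le_exp (mul_nonneg hk.le (add_nonneg hG (hg n)))
    calc d (n + 1) ≤ d n * (k * g n + 1) + k * h n := hstep
      _ ≤ d n * Real.exp (k * g n) + k * h n := by
        have := mul_le_mul_of_nonneg_left (Real.add_one_le_exp (k * g n)) (hd n)
        linarith
      _ ≤ (d m + k * H) * Real.exp (k * G) * Real.exp (k * g n)
            + k * h n * Real.exp (k * (G + g n)) :=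
        add_le_add (mul_le_mul_of_nonneg_right ih (Real.exp_pos _).le)
          (le_mul_of_one_le_right (mul_nonneg hk.le (hh n)) hone)
      _ = (d m + k * (H + h n)) * Real.exp (k * (G + g n)) := by
        rw [mul_assoc, ← Real.exp_add]
        ring_nf

/-- **Uniform discrete Gronwall lemma.** If `(d (n+1) - d n)/k ≤ g n * d n + h n` with
nonnegative sequences, and the sums of `g`, `h`, `d` over any window of `r` consecutive
indices (times `k`) are bounded by `a₁`, `a₂`, `a₃`, then
`d n ≤ (a₂ + a₃ / (k r)) * exp a₁` for all `n ≥ r`. -/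
theorem uniform_discrete_gronwall
    (k : ℝ) (hk : 0 < k) (d g h : ℕ → ℝ)
    (hd : ∀ n : ℕ, 0 ≤ d n) (hg : ∀ n : ℕ, 0 ≤ g n) (hh : ∀ n : ℕ, 0 ≤ h n)
    (hrec : ∀ n : ℕ, (d (n + 1) - d n) / k ≤ g n * d n + h n)
    (r : ℕ) (hr : 1 ≤ r)
    (a₁ a₂ a₃ : ℝ) (ha₁ : 0 ≤ a₁) (ha₂ : 0 ≤ a₂) (ha₃ : 0 ≤ a₃)
    (hG : ∀ n₀ : ℕ, k * ∑ n ∈ Finset.Ico n₀ (n₀ + r), g n ≤ a₁)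
    (hH : ∀ n₀ : ℕ, k * ∑ n ∈ Finset.Ico n₀ (n₀ + r), h n ≤ a₂)
    (hD : ∀ n₀ : ℕ, k * ∑ n ∈ Finset.Ico n₀ (n₀ + r), d n ≤ a₃) :
    ∀ n : ℕ, r ≤ n → d n ≤ (a₂ + a₃ / (k * r)) * Real.exp a₁ := by
  intro n hrn
  obtain ⟨n₀, rfl⟩ : ∃ n₀, n = n₀ + r := ⟨n - r, by omega⟩
  have hr0 : (0 : ℝ) < r := by exact_mod_cast hr
  obtain ⟨m, hm, hdm⟩ : ∃ m ∈ Finset.Ico n₀ (n₀ + r), d m ≤ a₃ / (k * r) := by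
    apply Finset.exists_le_of_sum_le (Finset.nonempty_Ico.2 (by omega))
    rw [Finset.sum_const, Nat.card_Ico, Nat.add_sub_cancel_left, nsmul_eq_mul]
    have havg : (r : ℝ) * (a₃ / (k * r)) = a₃ / k := by field_simp
    rw [havg, le_div_iff₀ hk, mul_comm]
    exact hD n₀
  rw [Finset.mem_Ico] at hm
  have hsub : Finset.Ico m (n₀ + r) ⊆ Finset.Ico n₀ (n₀ + r) :=
    Finset.Ico_subset_Ico_left hm.1
  have hHm : k * ∑ i ∈ Finset.Ico m (n₀ + r), h i ≤ a₂ :=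
    (mul_le_mul_of_nonneg_left
      (Finset.sum_le_sum_of_subset_of_nonneg hsub fun i _ _ => hh i) hk.le).trans (hH n₀)
  have hGm : k * ∑ i ∈ Finset.Ico m (n₀ + r), g i ≤ a₁ :=
    (mul_le_mul_of_nonneg_left
      (Finset.sum_le_sum_of_subset_of_nonneg hsub fun i _ _ => hg i) hk.le).trans (hG n₀)
  refine (gronwall_from k hk d g h hd hg hh hrec m (n₀ + r) hm.2.le).trans ?_
  exact mul_le_mul (by linarith) (Real.exp_le_exp.2 hGm) (Real.exp_pos _).le (by positivity)
end

section
/- Let k₀ > 0 and let a₁, a₂, a₃ : ℝ → ℝ be nonnegative and monotone nondecreasing functions. Let k ∈ (0, k₀] and let d, g, h : ℕ → ℝ be sequences with dⁿ, gⁿ, hⁿ ≥ 0 for all n ≥ 0, satisfying the recursion (d^{n+1} − dⁿ)/k ≤ gⁿ·dⁿ + hⁿ for all n ≥ 0, and such that for every integer r ≥ 1 and every n₀ ≥ 0 one has k·∑_{n=n₀}^{n₀+r−1} gⁿ ≤ a₁(k·r), k·∑_{n=n₀}^{n₀+r−1} hⁿ ≤ a₂(k·r), and k·∑_{n=n₀}^{n₀+r−1}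 dⁿ ≤ a₃(k·r). Then for every n ≥ 0, dⁿ ≤ (d⁰ + a₂(3k₀) + a₃(3k₀)/(2k₀)) · exp(a₁(3k₀)); in particular the sequence (dⁿ) is bounded by a constant depending only on d⁰, k₀ and the functions a₁, a₂, a₃, and independent of k and n. -/
/-!
Let `r = ⌈2k₀/k⌉`, so that `2k₀ ≤ k r ≤ 3k₀`. The classical discrete Gronwall inequality
(`discrete_gronwall`), started at an index `m` and run inside a window of length `r`, gives
`d n ≤ (d m + a₂(3k₀)) exp (a₁(3k₀))`, so it suffices to find a good starting index.
For `n < r` take `m = 0`. For `n ≥ r` take for `m` an index of the window `[n - r, n)` at which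
`d` is at most its mean over the window; that mean is at most
`a₃(3k₀) / (k r) ≤ a₃(3k₀) / (2k₀)`.
-/

/-- **Corollary 2.4.** Under the hypotheses of the uniform discrete Gronwall lemma,
uniformly for every window length `r`, with bounds given by nondecreasing nonnegative
functions `a₁ a₂ a₃` of the window time `k·r`, and `k ≤ k₀`, the sequence `d` is bounded
by a constant depending only on `d 0`, `k₀` and `a₁, a₂, a₃`, independent of `k` and `n`. -/
theorem uniform_discrete_gronwall_cor
    (k₀ : ℝ) (hk₀ : 0 < k₀)
    (a₁ a₂ a₃ : ℝ → ℝ)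
    (ha₁_nonneg : ∀ t : ℝ, 0 ≤ a₁ t) (ha₂_nonneg : ∀ t : ℝ, 0 ≤ a₂ t)
    (ha₃_nonneg : ∀ t : ℝ, 0 ≤ a₃ t)
    (ha₁_mono : Monotone a₁) (ha₂_mono : Monotone a₂) (ha₃_mono : Monotone a₃)
    (k : ℝ) (hk : 0 < k) (hkk₀ : k ≤ k₀)
    (d g h : ℕ → ℝ)
    (hd : ∀ n : ℕ, 0 ≤ d n) (hg : ∀ n : ℕ, 0 ≤ g n) (hh : ∀ n : ℕ, 0 ≤ h n)
    (hrec : ∀ n : ℕ, (d (n + 1) - d n) / k ≤ g n * d n + h n)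
    (hG : ∀ r : ℕ, 1 ≤ r → ∀ n₀ : ℕ,
      k * ∑ n ∈ Finset.Ico n₀ (n₀ + r), g n ≤ a₁ (k * r))
    (hH : ∀ r : ℕ, 1 ≤ r → ∀ n₀ : ℕ,
      k * ∑ n ∈ Finset.Ico n₀ (n₀ + r), h n ≤ a₂ (k * r))
    (hD : ∀ r : ℕ, 1 ≤ r → ∀ n₀ : ℕ,
      k * ∑ n ∈ Finset.Ico n₀ (n₀ + r), d n ≤ a₃ (k * r)) :
    ∀ n : ℕ,
      d n ≤ (d 0 + a₂ (3 * k₀) + a₃ (3 * k₀) / (2 * k₀)) * Real.exp (a₁ (3 * k₀)) := by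
  intro n
  obtain ⟨r, hr1, hlo, hhi⟩ : ∃ r : ℕ, 1 ≤ r ∧ 2 * k₀ ≤ k * r ∧ k * r ≤ 3 * k₀ := by
    refine ⟨⌈2 * k₀ / k⌉₊, Nat.ceil_pos.mpr (by positivity), ?_, ?_⟩
    · have := Nat.le_ceil (2 * k₀ / k)
      rw [div_le_iff₀ hk] at this
      linarith
    · have := (Nat.ceil_lt_add_one (by positivity : 0 ≤ 2 * k₀ / k)).le
      calc k * (⌈2 * k₀ / k⌉₊ : ℝ) ≤ k * (2 * k₀ / k + 1) := by gcongr
        _ = 2 * k₀ + k := by field_simp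
        _ ≤ 3 * k₀ := by linarith
  have hmean : 0 ≤ a₃ (3 * k₀) / (2 * k₀) := div_nonneg (ha₃_nonneg _) (by positivity)
  have key : ∀ p m : ℕ, p ≤ m → m ≤ n → n ≤ p + r →
      d m ≤ d 0 + a₃ (3 * k₀) / (2 * k₀) →
      d n ≤ (d 0 + a₂ (3 * k₀) + a₃ (3 * k₀) / (2 * k₀)) * Real.exp (a₁ (3 * k₀)) := by
    intro p m hpm hmn hnp hdm
    have hgr := discrete_gronwall (u := d) (c := fun i => k * g i) (b := fun i => k * h i)
      (hd m)
      (fun i _ => by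
        have hstep := hrec i
        rw [div_le_iff₀ hk] at hstep
        linarith)
      (fun i _ => mul_nonneg hk.le (hg i)) (fun i _ => mul_nonneg hk.le (hh i)) hmn
    rw [← Finset.mul_sum, ← Finset.mul_sum] at hgr
    have hsub : Finset.Ico m n ⊆ Finset.Ico p (p + r) := Finset.Ico_subset_Ico hpm hnp
    have h1 : k * ∑ i ∈ Finset.Ico m n, g i ≤ a₁ (3 * k₀) :=
      (mul_le_mul_of_nonneg_left
        (Finset.sum_le_sum_of_subset_of_nonneg hsub fun i _ _ => hg i) hk.le).trans
        ((hG r hr1 p).trans (ha₁_mono hhi))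
    have h2 : k * ∑ i ∈ Finset.Ico m n, h i ≤ a₂ (3 * k₀) :=
      (mul_le_mul_of_nonneg_left
        (Finset.sum_le_sum_of_subset_of_nonneg hsub fun i _ _ => hh i) hk.le).trans
        ((hH r hr1 p).trans (ha₂_mono hhi))
    refine hgr.trans (mul_le_mul (by linarith) (Real.exp_le_exp.mpr h1) (Real.exp_pos _).le ?_)
    linarith [hd 0, ha₂_nonneg (3 * k₀)]
  rcases lt_or_ge n r with hnr | hnr
  · exact key 0 0 le_rfl (Nat.zero_le n) (by omega) (by linarith)
  · obtain ⟨m, hm, hdm⟩ : ∃ m ∈ Finset.Ico (n - r) (n - r + r),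
        d m ≤ a₃ (3 * k₀) / (2 * k₀) := by
      refine Finset.exists_le_of_sum_le (Finset.nonempty_Ico.mpr (by omega)) ?_
      have h3 := (hD r hr1 (n - r)).trans (ha₃_mono hhi)
      rw [Finset.sum_const, Nat.card_Ico, Nat.add_sub_cancel_left, nsmul_eq_mul]
      refine le_of_mul_le_mul_left (h3.trans ?_) hk
      calc a₃ (3 * k₀) = 2 * k₀ * (a₃ (3 * k₀) / (2 * k₀)) := by field_simp
        _ ≤ k * r * (a₃ (3 * k₀) / (2 * k₀)) := mul_le_mul_of_nonneg_right hlo hmean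
        _ = k * (r * (a₃ (3 * k₀) / (2 * k₀))) := by ring
    rw [Finset.mem_Ico] at hm
    exact key (n - r) m hm.1 (by omega) (by omega) (by linarith [hd 0])
end

section
/- Let H be a real normed vector space, k > 0, N ≥ 1 a natural number, and x₀, x₁, …, x_N ∈ H. Set tₙ = n·k. Define ũ : [0, N·k] → H as the continuous piecewise-linear interpolant with ũ(tₙ) = xₙ for each n (so ũ(t) = xₙ + ((tₙ − t)/k)·(x_{n−1} − xₙ) for t ∈ [t_{n−1}, tₙ]), and define uʳ : (0, N·k] → H as the piecewise-constant function equal to xₙ on (t_{n−1}, tₙ]. Then ∫₀^{N·k} ‖ũ(t) − uʳ(t)‖² dt = (k/3)·∑_{n=1}^{N} ‖xₙ − x_{n−1}‖². Consequently, if k²·∑_{n=1}^{N} ‖(xₙ − x_{n−1})/k‖² ≤ C₀, then ∫₀^{N·k} ‖ũ(t) − uʳ(t)‖² dt ≤ C₀·k/3. -/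
/-!
On the `n`-th cell `(t_{n-1}, t_n]` the difference of the two interpolants is
`((t_n - t) / k) • (x_{n-1} - x_n)`, so its squared norm is a quadratic polynomial in `t` times
`‖x_n - x_{n-1}‖²`, and the polynomial integrates to `k / 3` over the cell (`integral_cell`).
Summing over the adjacent cells gives the identity. The bound follows since
`k² ‖k⁻¹ • v‖² = ‖v‖²`.
-/

theorem integral_cell (k : ℝ) (hk : 0 < k) (b c : ℝ) :
    ∫ t in (b - k)..b, ((b - t) / k) ^ 2 * c = k / 3 * c := by
  rw [intervalIntegral.integral_mul_const,
    intervalIntegral.integral_comp_sub_left (fun s => (s / k) ^ 2) b]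
  simp only [div_pow, intervalIntegral.integral_div, integral_pow]
  field_simp
  ring

/-- The interpolant-discrepancy identity from Theorem 4.6: if `ũ` is the piecewise-linear
interpolant of the values `xₙ` at times `tₙ = n k` and `uʳ` the piecewise-constant one,
then `∫₀^{Nk} ‖ũ - uʳ‖² = (k/3) ∑ₙ ‖xₙ - x_{n-1}‖²`; consequently, if
`k² ∑ₙ ‖(xₙ - x_{n-1})/k‖² ≤ C₀` then `∫₀^{Nk} ‖ũ - uʳ‖² ≤ C₀ k / 3`. -/
theorem interpolant_discrepancy
    {H : Type*} [NormedAddCommGroup H] [NormedSpace ℝ H]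
    (k : ℝ) (hk : 0 < k) (N : ℕ) (hN : 1 ≤ N) (x : ℕ → H)
    (utilde ur : ℝ → H)
    (hutilde : ∀ n : ℕ, 1 ≤ n → n ≤ N →
      ∀ t ∈ Set.Icc (((n : ℝ) - 1) * k) ((n : ℝ) * k),
        utilde t = x n + ((((n : ℝ) * k - t) / k) : ℝ) • (x (n - 1) - x n))
    (hur : ∀ n : ℕ, 1 ≤ n → n ≤ N →
      ∀ t ∈ Set.Ioc (((n : ℝ) - 1) * k) ((n : ℝ) * k), ur t = x n) :
    (∫ t in (0 : ℝ)..((N : ℝ) * k), ‖utilde t - ur t‖ ^ 2) =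
      (k / 3) * ∑ n ∈ Finset.Icc 1 N, ‖x n - x (n - 1)‖ ^ 2 ∧
    ∀ C₀ : ℝ,
      k ^ 2 * ∑ n ∈ Finset.Icc 1 N, ‖(k⁻¹ : ℝ) • (x n - x (n - 1))‖ ^ 2 ≤ C₀ →
      (∫ t in (0 : ℝ)..((N : ℝ) * k), ‖utilde t - ur t‖ ^ 2) ≤ C₀ * k / 3 := by
  set f : ℝ → ℝ := fun t => ‖utilde t - ur t‖ ^ 2 with hf
  set g : ℕ → ℝ → ℝ := fun i t =>
    ((((i : ℝ) + 1) * k - t) / k) ^ 2 * ‖x (i + 1) - x i‖ ^ 2 with hg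
  set a : ℕ → ℝ := fun i => (i : ℝ) * k with ha
  -- The cell is half-open: at its left endpoint `ur` takes the value of the previous cell.
  have hcell : ∀ i < N, Set.EqOn (g i) f (Set.uIoc (a i) (a (i + 1))) := by
    intro i hi t ht
    have hle : a i ≤ a (i + 1) := by
      simp only [ha]; push_cast; nlinarith
    rw [Set.uIoc_of_le hle] at ht
    have ht' : t ∈ Set.Ioc ((((i + 1 : ℕ) : ℝ) - 1) * k) (((i + 1 : ℕ) : ℝ) * k) := by
      simpa [ha] using ht
    have h1 := hutilde (i + 1) (by omega) (by omega) t (Set.Ioc_subset_Icc_self ht')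
    have h2 := hur (i + 1) (by omega) (by omega) t ht'
    simp only [hf, hg]
    rw [h1, h2, add_sub_cancel_left, norm_smul, mul_pow, Real.norm_eq_abs, sq_abs,
      Nat.add_sub_cancel, norm_sub_rev (x i)]
    push_cast
    rfl
  have hint : ∀ i < N, IntervalIntegrable f MeasureTheory.volume (a i) (a (i + 1)) := by
    intro i hi
    refine IntervalIntegrable.congr (hcell i hi) (Continuous.intervalIntegrable ?_ _ _)
    simp only [hg]
    fun_prop
  have hval : ∀ i < N, ∫ t in (a i)..(a (i + 1)), f t = k / 3 * ‖x (i + 1) - x i‖ ^ 2 := by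
    intro i hi
    rw [← integral_cell k hk (((i : ℝ) + 1) * k) (‖x (i + 1) - x i‖ ^ 2)]
    have e1 : ((i : ℝ) + 1) * k - k = a i := by simp only [ha]; ring
    have e2 : ((i : ℝ) + 1) * k = a (i + 1) := by simp only [ha]; push_cast; rfl
    rw [e1, ← intervalIntegral.integral_congr_ae (Filter.Eventually.of_forall (hcell i hi)), e2]
    simp only [hg, e2]
  have hsum : ∀ F : ℕ → ℝ, ∑ n ∈ Finset.Icc 1 N, F n = ∑ i ∈ Finset.range N, F (i + 1) := by
    intro F
    rw [Finset.range_eq_Ico, Finset.sum_Ico_add' F 0 N 1]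
    rfl
  have key : (∫ t in (0 : ℝ)..((N : ℝ) * k), f t) =
      (k / 3) * ∑ n ∈ Finset.Icc 1 N, ‖x n - x (n - 1)‖ ^ 2 := by
    have h := intervalIntegral.sum_integral_adjacent_intervals hint
    have h0 : a 0 = 0 := by simp [ha]
    rw [h0] at h
    rw [← h, hsum, Finset.mul_sum]
    refine Finset.sum_congr rfl fun i hi => ?_
    rw [hval i (Finset.mem_range.mp hi), Nat.add_sub_cancel]
  refine ⟨key, fun C₀ hC => ?_⟩
  have hscale : k ^ 2 * ∑ n ∈ Finset.Icc 1 N, ‖(k⁻¹ : ℝ) • (x n - x (n - 1))‖ ^ 2 =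
      ∑ n ∈ Finset.Icc 1 N, ‖x n - x (n - 1)‖ ^ 2 := by
    rw [Finset.mul_sum]
    refine Finset.sum_congr rfl fun n _ => ?_
    rw [norm_smul, mul_pow, Real.norm_eq_abs, sq_abs]
    field_simp
  rw [hscale] at hC
  rw [key]
  nlinarith
end
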